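/- For all K < 0, N ∈ (1,∞) and D ∈ (0,∞): λ[h_{K,N,D}] ≥ (1/4)·max(|K|·(N−1), N²/D²)·(sinh(√(−K/(N−1))·D/2)/sinh(√(−K/(N−1))·D))^{N−1}. -/

import Mathlib

open MeasureTheory Filter

/-- The function `s_κ` from the paper. -/
noncomputable def sKappa (κ θ : ℝ) : ℝ :=
  if 0 < κ then Real.sin (Real.sqrt κ * θ) / Real.sqrt κ
  else if κ < 0 then Real.sinh (Real.sqrt (-κ) * θ) / Real.sqrt (-κ)
  else θ

/-- The support of the measure `h · 𝓛¹`. -/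
noncomputable def measSupport (h : ℝ → ℝ) : Set ℝ :=
  {x : ℝ | ∀ ε > 0,
    0 < (MeasureTheory.volume.withDensity (fun y => ENNReal.ofReal (h y))) (Metric.ball x ε)}

/-- A one-dimensional `MCP(K,N)` density. -/
def IsMCPDensity (K N : ℝ) (h : ℝ → ℝ) : Prop :=
  (∀ x, 0 ≤ h x) ∧ MeasureTheory.LocallyIntegrable h MeasureTheory.volume ∧
  ∀ x₀ ∈ measSupport h, ∀ x₁ ∈ measSupport h,
    (0 < K → x₀ ≠ x₁ → |x₁ - x₀| < Real.pi / Real.sqrt (K / (N - 1))) ∧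
    ∀ t ∈ Set.Icc (0:ℝ) 1,
      (sKappa (K / (N - 1)) ((1 - t) * |x₁ - x₀|) / sKappa (K / (N - 1)) |x₁ - x₀|) ^ (N - 1)
          * h x₀
        ≤ h (t * x₁ + (1 - t) * x₀)

/-- The model density `h_{K,N,D}`. -/
noncomputable def modelDensity (K N D : ℝ) (x : ℝ) : ℝ :=
  if x ∈ Set.Icc 0 (D / 2) then sKappa (K / (N - 1)) (D - x) ^ (N - 1)
  else if x ∈ Set.Icc (D / 2) D then sKappa (K / (N - 1)) x ^ (N - 1)
  else 0

/-- Locally Lipschitz functions on a subset `I` of the reals. -/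
def LocLipschitzOn (f : ℝ → ℝ) (I : Set ℝ) : Prop :=
  ∀ x ∈ I, ∃ ε > 0, ∃ C : NNReal, LipschitzOnWith C f (I ∩ Metric.ball x ε)

/-- The local Lipschitz slope `|∇f|(x)` relative to `I`. -/
noncomputable def slopeOn (f : ℝ → ℝ) (I : Set ℝ) (x : ℝ) : ℝ :=
  Filter.limsup (fun y => |f y - f x| / |y - x|) (nhdsWithin x (I \ {x}))

/-- The Poincaré constant `λ[h, I]` of the density `h` on `I`. -/
noncomputable def poincareConst (h : ℝ → ℝ) (I : Set ℝ) : ℝ :=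
  sInf { r : ℝ | ∃ f : ℝ → ℝ, LocLipschitzOn f I ∧
    (∫ x in I, f x * h x) = 0 ∧
    (0 < ∫ x in I, (f x) ^ 2 * h x) ∧
    MeasureTheory.IntegrableOn (fun x => (f x) ^ 2 * h x) I ∧
    r = (∫ x in I, (slopeOn f I x) ^ 2 * h x) / (∫ x in I, (f x) ^ 2 * h x) }

section RadialBounds

variable {S S' : ℝ → ℝ} {b L D p : ℝ}

/-- If `b S ≤ S'`, then `∫ S ^ p` is controlled by the endpoint values of `S ^ p`. -/
lemma integral_rpow_le_of_mul_le_deriv (hLD : L ≤ D) (hb : 0 < b) (hp : p ≠ 0)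
    (hS : ∀ t ∈ Set.Icc L D, 0 < S t) (hS' : ∀ t ∈ Set.Icc L D, HasDerivAt S (S' t) t)
    (hbS : ∀ t ∈ Set.Icc L D, b * S t ≤ S' t) :
    ∫ t in L..D, S t ^ p ≤ (S D ^ p - S L ^ p) / (p * b) := by
  have hcont : ContinuousOn (fun t => S t ^ p) (Set.Icc L D) := fun t ht =>
    ((hS' t ht).continuousAt.continuousWithinAt).rpow_const (Or.inl (hS t ht).ne')
  have h := intervalIntegral.integral_le_sub_of_hasDeriv_right_of_le (a := L) (b := D)
    (g := fun t => S t ^ p / (p * b)) (g' := fun t => S' t * p * S t ^ (p - 1) / (p * b))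
    (φ := fun t => S t ^ p) hLD (hcont.div_const _)
    (fun t ht => (((hS' t (Set.Ioo_subset_Icc_self ht)).rpow_const
      (Or.inl (hS t (Set.Ioo_subset_Icc_self ht)).ne')).div_const _).hasDerivWithinAt)
    hcont.integrableOn_Icc (fun t ht => by
      have ht := Set.Ioo_subset_Icc_self ht
      have h1 : S t ^ p = S t ^ (p - 1) * S t := by
        rw [Real.rpow_sub_one (hS t ht).ne', div_mul_cancel₀ _ (hS t ht).ne']
      have h2 : S' t * p * S t ^ (p - 1) / (p * b) = S t ^ (p - 1) * (S' t / b) := by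
        field_simp
      rw [h1, h2]
      exact mul_le_mul_of_nonneg_left ((le_div_iff₀' hb).2 (hbS t ht))
        (Real.rpow_nonneg (hS t ht).le _))
  refine h.trans_eq ?_
  ring

/-- If `S ≤ t S'`, then `∫ S ^ p` is at most `D S(D) ^ p / (p + 1)`. -/
lemma integral_rpow_le_of_le_mul_deriv (hL : 0 < L) (hLD : L ≤ D) (hp : 0 < p)
    (hS : ∀ t ∈ Set.Icc L D, 0 < S t) (hS' : ∀ t ∈ Set.Icc L D, HasDerivAt S (S' t) t)
    (htS : ∀ t ∈ Set.Icc L D, S t ≤ t * S' t) :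
    ∫ t in L..D, S t ^ p ≤ D * S D ^ p / (p + 1) := by
  have hcont : ContinuousOn (fun t => S t ^ p) (Set.Icc L D) := fun t ht =>
    ((hS' t ht).continuousAt.continuousWithinAt).rpow_const (Or.inl (hS t ht).ne')
  have h := intervalIntegral.integral_le_sub_of_hasDeriv_right_of_le (a := L) (b := D)
    (g := fun t => t * S t ^ p / (p + 1))
    (g' := fun t => (1 * S t ^ p + t * (S' t * p * S t ^ (p - 1))) / (p + 1))
    (φ := fun t => S t ^ p) hLD ((continuousOn_id.mul hcont).div_const _)
    (fun t ht => (((hasDerivAt_id t).mul ((hS' t (Set.Ioo_subset_Icc_self ht)).rpow_const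
      (Or.inl (hS t (Set.Ioo_subset_Icc_self ht)).ne'))).div_const _).hasDerivWithinAt)
    hcont.integrableOn_Icc (fun t ht => by
      have ht := Set.Ioo_subset_Icc_self ht
      have h1 : S t ^ p = S t ^ (p - 1) * S t := by
        rw [Real.rpow_sub_one (hS t ht).ne', div_mul_cancel₀ _ (hS t ht).ne']
      have h2 := mul_le_mul_of_nonneg_left (htS t ht)
        (mul_nonneg hp.le (Real.rpow_nonneg (hS t ht).le (p - 1)))
      rw [le_div_iff₀ (by linarith), h1]
      linarith)
  refine h.trans ?_
  have h0 : 0 ≤ L * S L ^ p / (p + 1) :=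
    div_nonneg (mul_nonneg hL.le (Real.rpow_nonneg (hS L ⟨le_rfl, hLD⟩).le _)) (by linarith)
  linarith

/-- If `S ≤ t S'`, then `∫ S ^ (-p)` is at most `D ^ 2 S(L) ^ (-p) / (L (p + 1))`. -/
lemma integral_rpow_neg_le_of_le_mul_deriv (hL : 0 < L) (hLD : L ≤ D) (hp : 0 < p)
    (hS : ∀ t ∈ Set.Icc L D, 0 < S t) (hS' : ∀ t ∈ Set.Icc L D, HasDerivAt S (S' t) t)
    (htS : ∀ t ∈ Set.Icc L D, S t ≤ t * S' t) :
    ∫ t in L..D, S t ^ (-p) ≤ D ^ 2 / (p + 1) * (L⁻¹ * S L ^ (-p)) := by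
  have hcont : ContinuousOn (fun t => S t ^ (-p)) (Set.Icc L D) := fun t ht =>
    ((hS' t ht).continuousAt.continuousWithinAt).rpow_const (Or.inl (hS t ht).ne')
  have hinv : ContinuousOn (fun t : ℝ => t⁻¹) (Set.Icc L D) :=
    continuousOn_id.inv₀ fun t ht => (hL.trans_le ht.1).ne'
  have h := intervalIntegral.integral_le_sub_of_hasDeriv_right_of_le (a := L) (b := D)
    (g := fun t => -(D ^ 2 / (p + 1)) * (t⁻¹ * S t ^ (-p)))
    (g' := fun t => -(D ^ 2 / (p + 1)) *
      (-(t ^ 2)⁻¹ * S t ^ (-p) + t⁻¹ * (S' t * (-p) * S t ^ (-p - 1))))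
    (φ := fun t => S t ^ (-p)) hLD (continuousOn_const.mul (hinv.mul hcont))
    (fun t ht => (((hasDerivAt_inv (hL.trans ht.1).ne').mul
      ((hS' t (Set.Ioo_subset_Icc_self ht)).rpow_const
      (Or.inl (hS t (Set.Ioo_subset_Icc_self ht)).ne'))).const_mul _).hasDerivWithinAt)
    hcont.integrableOn_Icc (fun t ht => by
      have ht := Set.Ioo_subset_Icc_self ht
      have ht0 : 0 < t := hL.trans_le ht.1
      have hD0 : 0 < D := ht0.trans_le ht.2
      have hP : 0 ≤ S t ^ (-p - 1) := Real.rpow_nonneg (hS t ht).le _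
      have h1 : S t ^ (-p) = S t ^ (-p - 1) * S t := by
        rw [Real.rpow_sub_one (hS t ht).ne', div_mul_cancel₀ _ (hS t ht).ne']
      have h3 : -(D ^ 2 / (p + 1)) *
          (-(t ^ 2)⁻¹ * S t ^ (-p) + t⁻¹ * (S' t * (-p) * S t ^ (-p - 1)))
          = S t ^ (-p - 1) * ((D / t) ^ 2 * ((S t + p * (t * S' t)) / (p + 1))) := by
        rw [h1]; field_simp; ring
      rw [h3, h1]
      refine mul_le_mul_of_nonneg_left ?_ hP
      have h4 : S t ≤ (S t + p * (t * S' t)) / (p + 1) := by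
        rw [le_div_iff₀ (by linarith)]
        linarith [mul_le_mul_of_nonneg_left (htS t ht) hp.le]
      have h5 : 1 ≤ (D / t) ^ 2 := one_le_pow₀ ((one_le_div ht0).2 ht.2)
      calc S t ≤ 1 * ((S t + p * (t * S' t)) / (p + 1)) := by rwa [one_mul]
        _ ≤ _ := mul_le_mul_of_nonneg_right h5 ((hS t ht).le.trans h4))
  refine h.trans ?_
  have h0 : 0 ≤ D ^ 2 / (p + 1) * (D⁻¹ * S D ^ (-p)) :=
    mul_nonneg (by positivity) (mul_nonneg (inv_nonneg.2 (hL.trans_le hLD).le)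
      (Real.rpow_nonneg (hS D ⟨hLD, le_rfl⟩).le _))
  linarith

end RadialBounds

lemma sinh_le_mul_cosh {x : ℝ} (hx : 0 ≤ x) : Real.sinh x ≤ x * Real.cosh x := by
  have h := (convex_Icc 0 x).image_sub_le_mul_sub_of_deriv_le (f := Real.sinh) (C := Real.cosh x)
    Real.continuous_sinh.continuousOn Real.differentiable_sinh.differentiableOn
    (fun y hy => by
      rw [interior_Icc] at hy
      rw [Real.deriv_sinh, Real.cosh_le_cosh, abs_of_pos hy.1, abs_of_nonneg hx]
      exact hy.2.le) 0 ⟨le_rfl, hx⟩ x ⟨hx, le_rfl⟩ hx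
  simpa [mul_comm] using h

/-- A bound for the product of `∫ w` and `∫ 1 / w` over a half interval, for
`w = (sinh (a t) / a) ^ n`. -/
lemma max_mul_integral_mul_integral_le {a n D : ℝ} (ha : 0 < a) (hn : 0 < n) (hD : 0 < D) :
    max ((n * a) ^ 2) ((n + 1) ^ 2 / D ^ 2) *
        (Real.sinh (a * (D / 2)) / Real.sinh (a * D)) ^ n *
      ((∫ t in D / 2..D, (Real.sinh (a * t) / a) ^ (-n)) *
        ∫ t in D / 2..D, (Real.sinh (a * t) / a) ^ n) ≤ 2 := by
  set S : ℝ → ℝ := fun t => Real.sinh (a * t) / a with hSdef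
  set L := D / 2 with hLdef
  have hL : 0 < L := by positivity
  have hLD : L ≤ D := by linarith
  have hpos : ∀ t ∈ Set.Icc L D, 0 < S t := fun t ht =>
    div_pos (Real.sinh_pos_iff.2 (mul_pos ha (hL.trans_le ht.1))) ha
  have hder : ∀ t ∈ Set.Icc L D, HasDerivAt S (Real.cosh (a * t)) t := fun t _ => by
    have h := (((hasDerivAt_id t).const_mul a).sinh).div_const a
    simpa [hSdef, mul_div_assoc, ha.ne'] using h
  have hbS : ∀ t ∈ Set.Icc L D, a * S t ≤ Real.cosh (a * t) := fun t _ => by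
    rw [hSdef, mul_div_cancel₀ _ ha.ne']
    exact (Real.sinh_lt_cosh _).le
  have htS : ∀ t ∈ Set.Icc L D, S t ≤ t * Real.cosh (a * t) := fun t ht => by
    rw [hSdef, div_le_iff₀ ha]
    refine (sinh_le_mul_cosh (mul_pos ha (hL.trans_le ht.1)).le).trans_eq (by ring)
  have hSL := hpos L ⟨le_rfl, hLD⟩
  have hSD := hpos D ⟨hLD, le_rfl⟩
  have hratio : (Real.sinh (a * L) / Real.sinh (a * D)) ^ n = S L ^ n / S D ^ n := by
    rw [← Real.div_rpow hSL.le hSD.le, hSdef, div_div_div_cancel_right₀ ha.ne']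
  have hPL : 0 < S L ^ n := Real.rpow_pos_of_pos hSL _
  have hPD : 0 < S D ^ n := Real.rpow_pos_of_pos hSD _
  have hW0 : 0 ≤ ∫ t in L..D, S t ^ n :=
    intervalIntegral.integral_nonneg hLD fun t ht => Real.rpow_nonneg (hpos t ht).le _
  rw [hratio]
  rcases le_total ((n + 1) ^ 2 / D ^ 2) ((n * a) ^ 2) with hM | hM
  · rw [max_eq_left hM]
    have hW : ∫ t in L..D, S t ^ n ≤ S D ^ n / (n * a) := by
      refine (integral_rpow_le_of_mul_le_deriv hLD ha hn.ne' hpos hder hbS).trans ?_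
      gcongr
      linarith
    have hV : ∫ t in L..D, S t ^ (-n) ≤ (S L ^ n)⁻¹ / (n * a) := by
      refine (integral_rpow_le_of_mul_le_deriv hLD ha (neg_ne_zero.2 hn.ne') hpos hder hbS).trans ?_
      rw [neg_mul, div_neg, ← neg_div, neg_sub, Real.rpow_neg hSL.le, Real.rpow_neg hSD.le]
      gcongr
      linarith [inv_pos.2 hPD]
    calc _ ≤ (n * a) ^ 2 * (S L ^ n / S D ^ n) *
          ((S L ^ n)⁻¹ / (n * a) * (S D ^ n / (n * a))) := by gcongr
      _ = 1 := by field_simp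
      _ ≤ 2 := by norm_num
  · rw [max_eq_right hM]
    have hW := integral_rpow_le_of_le_mul_deriv hL hLD hn hpos hder htS
    have hV := integral_rpow_neg_le_of_le_mul_deriv hL hLD hn hpos hder htS
    rw [Real.rpow_neg hSL.le] at hV
    calc _ ≤ (n + 1) ^ 2 / D ^ 2 * (S L ^ n / S D ^ n) *
          (D ^ 2 / (n + 1) * (L⁻¹ * (S L ^ n)⁻¹) * (D * S D ^ n / (n + 1))) := by gcongr
      _ = D / L := by field_simp
      _ = 2 := by rw [hLdef]; field_simp
      _ ≤ 2 := le_rfl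

section WeightedPoincare

variable {w f : ℝ → ℝ} {p q : ℝ} {C : NNReal}

lemma intervalIntegrable_deriv_sq_mul (hpq : p ≤ q) (hw : Continuous w)
    (hf : LipschitzOnWith C f (Set.Icc p q)) :
    IntervalIntegrable (fun x => deriv f x ^ 2 * w x) volume p q := by
  have h1 : IntervalIntegrable (fun x => deriv f x ^ 2) volume p q := by
    rw [intervalIntegrable_iff_integrableOn_Ioo_of_le hpq]
    refine Measure.integrableOn_of_bounded (M := (C : ℝ) ^ 2) measure_Ioo_lt_top.ne
      ((measurable_deriv f).pow_const 2).aestronglyMeasurable ?_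
    refine (ae_restrict_mem measurableSet_Ioo).mono fun x hx => ?_
    rw [norm_pow]
    exact pow_le_pow_left₀ (norm_nonneg _)
      (norm_deriv_le_of_lipschitzOn (Icc_mem_nhds hx.1 hx.2) hf) 2
  exact h1.mul_continuousOn hw.continuousOn

lemma sq_sub_le_mul_integral_deriv_sq {u v V : ℝ} (hw : Continuous w) (hw0 : ∀ x, 0 < w x)
    (hf : LipschitzOnWith C f (Set.Icc p q)) (hpu : p ≤ u) (huv : u ≤ v) (hvq : v ≤ q)
    (hV0 : 0 < V) (hV : ∫ x in u..v, (w x)⁻¹ ≤ V) :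
    (f v - f u) ^ 2 ≤ V * ∫ x in p..q, deriv f x ^ 2 * w x := by
  have hpq : p ≤ q := hpu.trans (huv.trans hvq)
  have hE := intervalIntegrable_deriv_sq_mul hpq hw hf
  have hfuv : LipschitzOnWith C f (Set.uIcc u v) := by
    rw [Set.uIcc_of_le huv]; exact hf.mono (Set.Icc_subset_Icc hpu hvq)
  have hac := hfuv.absolutelyContinuousOnInterval
  have hEuv : IntervalIntegrable (fun x => deriv f x ^ 2 * w x) volume u v :=
    intervalIntegrable_deriv_sq_mul huv hw (hf.mono (Set.Icc_subset_Icc hpu hvq))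
  have hEle : ∫ x in u..v, deriv f x ^ 2 * w x ≤ ∫ x in p..q, deriv f x ^ 2 * w x :=
    intervalIntegral.integral_mono_interval hpu huv hvq
      (ae_of_all _ fun x => mul_nonneg (sq_nonneg _) (hw0 x).le) hE
  have hinv : IntervalIntegrable (fun x => (w x)⁻¹) volume u v :=
    (hw.inv₀ fun x => (hw0 x).ne').intervalIntegrable _ _
  set Δ := f v - f u with hΔ
  set s := Δ / V with hs
  have key : 2 * s * Δ ≤ s ^ 2 * (∫ x in u..v, (w x)⁻¹) + ∫ x in u..v, deriv f x ^ 2 * w x := by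
    rw [hΔ, ← hac.integral_deriv_eq_sub, ← intervalIntegral.integral_const_mul,
      ← intervalIntegral.integral_const_mul,
      ← intervalIntegral.integral_add (hinv.const_mul _) hEuv]
    refine intervalIntegral.integral_mono_on huv (hac.intervalIntegrable_deriv.const_mul _)
      ((hinv.const_mul _).add hEuv) fun x _ => ?_
    have hx := hw0 x
    have h : s ^ 2 * (w x)⁻¹ + deriv f x ^ 2 * w x - 2 * s * deriv f x
        = (w x)⁻¹ * (s - deriv f x * w x) ^ 2 := by field_simp; ring
    have h' : 0 ≤ (w x)⁻¹ * (s - deriv f x * w x) ^ 2 := by positivity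
    linarith
  have h1 : s ^ 2 * (∫ x in u..v, (w x)⁻¹) ≤ s ^ 2 * V :=
    mul_le_mul_of_nonneg_left hV (sq_nonneg _)
  have h2 : 2 * s * Δ - s ^ 2 * V = Δ ^ 2 / V := by rw [hs]; field_simp; ring
  have h3 : Δ ^ 2 / V ≤ ∫ x in p..q, deriv f x ^ 2 * w x := by linarith
  rwa [div_le_iff₀' hV0] at h3

/-- A weighted Poincaré inequality on an interval, in terms of a bound `V` for the integral of
`1 / w` on either side of a base point `c`. -/
lemma integral_sq_mul_le_of_integral_inv_le {c V : ℝ} (hw : Continuous w) (hw0 : ∀ x, 0 < w x)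
    (hf : LipschitzOnWith C f (Set.Icc p q)) (hpc : p ≤ c) (hcq : c ≤ q) (hV0 : 0 < V)
    (hl : ∫ x in p..c, (w x)⁻¹ ≤ V) (hr : ∫ x in c..q, (w x)⁻¹ ≤ V)
    (hmean : ∫ x in p..q, f x * w x = 0) :
    ∫ x in p..q, f x ^ 2 * w x ≤
      V * (∫ x in p..q, w x) * ∫ x in p..q, deriv f x ^ 2 * w x := by
  have hpq := hpc.trans hcq
  have hiw : Continuous fun x => (w x)⁻¹ := hw.inv₀ fun x => (hw0 x).ne'
  have hinv0 : ∀ {μ : Measure ℝ}, 0 ≤ᵐ[μ] fun x => (w x)⁻¹ :=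
    ae_of_all _ fun x => (inv_pos.2 (hw0 x)).le
  set E := ∫ x in p..q, deriv f x ^ 2 * w x with hE
  have hpt : ∀ x ∈ Set.Icc p q, (f x - f c) ^ 2 ≤ V * E := by
    intro x hx
    rcases le_total c x with hcx | hxc
    · exact sq_sub_le_mul_integral_deriv_sq hw hw0 hf hpc hcx hx.2 hV0
        ((intervalIntegral.integral_mono_interval le_rfl hcx hx.2 hinv0
          (hiw.intervalIntegrable _ _)).trans hr)
    · rw [← neg_sub, neg_sq]
      exact sq_sub_le_mul_integral_deriv_sq hw hw0 hf hx.1 hxc hcq hV0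
        ((intervalIntegral.integral_mono_interval hx.1 hxc le_rfl hinv0
          (hiw.intervalIntegrable _ _)).trans hl)
  have hfc : ContinuousOn f (Set.uIcc p q) := by
    rw [Set.uIcc_of_le hpq]; exact hf.continuousOn
  have hwi : IntervalIntegrable w volume p q := hw.intervalIntegrable _ _
  have hfw : IntervalIntegrable (fun x => f x * w x) volume p q :=
    (hfc.mul hw.continuousOn).intervalIntegrable
  have hf2w : IntervalIntegrable (fun x => f x ^ 2 * w x) volume p q :=
    ((hfc.pow 2).mul hw.continuousOn).intervalIntegrable
  have hle : ∫ x in p..q, (f x ^ 2 * w x - 2 * f c * (f x * w x) + f c ^ 2 * w x) ≤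
      ∫ x in p..q, V * E * w x := by
    refine intervalIntegral.integral_mono_on hpq
      ((hf2w.sub (hfw.const_mul _)).add (hwi.const_mul _)) (hwi.const_mul _) fun x hx => ?_
    have h := mul_le_mul_of_nonneg_right (hpt x hx) (hw0 x).le
    linarith
  rw [intervalIntegral.integral_add (hf2w.sub (hfw.const_mul _)) (hwi.const_mul _),
    intervalIntegral.integral_sub hf2w (hfw.const_mul _), intervalIntegral.integral_const_mul,
    intervalIntegral.integral_const_mul, intervalIntegral.integral_const_mul, hmean] at hle
  have h0 : 0 ≤ f c ^ 2 * ∫ x in p..q, w x := mul_nonneg (sq_nonneg _)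
    (intervalIntegral.integral_nonneg hpq fun x _ => (hw0 x).le)
  linarith

end WeightedPoincare

lemma slopeOn_univ_of_differentiableAt {f : ℝ → ℝ} {x : ℝ} (hf : DifferentiableAt ℝ f x) :
    slopeOn f Set.univ x = |deriv f x| := by
  have h := (hasDerivAt_iff_tendsto_slope.1 hf.hasDerivAt).abs
  rw [slopeOn, ← Set.compl_eq_univ_sdiff]
  refine Tendsto.limsup_eq (h.congr fun y => ?_)
  rw [slope_def_field, abs_div]

lemma LocLipschitzOn.exists_lipschitzOnWith_Icc {f : ℝ → ℝ} (hf : LocLipschitzOn f Set.univ)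
    (p q : ℝ) : ∃ C : NNReal, LipschitzOnWith C f (Set.Icc p q) := by
  refine LocallyLipschitzOn.exists_lipschitzOnWith_of_compact isCompact_Icc fun x _ => ?_
  obtain ⟨ε, hε, C, hC⟩ := hf x (Set.mem_univ x)
  exact ⟨C, _, mem_nhdsWithin_of_mem_nhds (Metric.ball_mem_nhds x hε), by simpa using hC⟩

/-- A continuous positive function on `ℝ` that agrees with the model density on `[0, D]`, where
`a = √(-K / (N - 1))` and `n = N - 1`. -/
noncomputable def modelWeight (a n D x : ℝ) : ℝ :=
  (Real.sinh (a * max x (D - x)) / a) ^ n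

lemma modelWeight_base_pos {a D : ℝ} (ha : 0 < a) (hD : 0 < D) (x : ℝ) :
    0 < Real.sinh (a * max x (D - x)) / a := by
  refine div_pos (Real.sinh_pos_iff.2 (mul_pos ha ?_)) ha
  rcases le_total x 0 with h | h
  · exact lt_max_of_lt_right (by linarith)
  · rcases h.eq_or_lt with rfl | h
    · exact lt_max_of_lt_right (by linarith)
    · exact lt_max_of_lt_left h

lemma modelWeight_pos {a n D : ℝ} (ha : 0 < a) (hD : 0 < D) (x : ℝ) : 0 < modelWeight a n D x :=
  Real.rpow_pos_of_pos (modelWeight_base_pos ha hD x) _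

lemma continuous_modelWeight {a n D : ℝ} (ha : 0 < a) (hD : 0 < D) :
    Continuous (modelWeight a n D) :=
  Continuous.rpow_const (by fun_prop) fun x => Or.inl (modelWeight_base_pos ha hD x).ne'

lemma modelWeight_sub_left (a n D x : ℝ) : modelWeight a n D (D - x) = modelWeight a n D x := by
  rw [modelWeight, modelWeight, sub_sub_cancel, max_comm]

lemma modelWeight_of_half_le {a n D x : ℝ} (hx : D / 2 ≤ x) :
    modelWeight a n D x = (Real.sinh (a * x) / a) ^ n := by
  rw [modelWeight, max_eq_left (by linarith)]

lemma modelDensity_eq_indicator {K N D : ℝ} (hK : K < 0) (hN : 1 < N) (hD : 0 < D) :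
    modelDensity K N D =
      (Set.Icc 0 D).indicator (modelWeight (Real.sqrt (-K / (N - 1))) (N - 1) D) := by
  have hκ : K / (N - 1) < 0 := div_neg_of_neg_of_pos hK (by linarith)
  have hs : ∀ θ, sKappa (K / (N - 1)) θ =
      Real.sinh (Real.sqrt (-K / (N - 1)) * θ) / Real.sqrt (-K / (N - 1)) := fun θ => by
    rw [sKappa, if_neg hκ.not_gt, if_pos hκ, neg_div]
  funext x
  simp only [modelDensity, Set.indicator, hs, modelWeight, Set.mem_Icc]
  by_cases h0 : 0 ≤ x
  · by_cases hx : x ≤ D / 2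
    · rw [if_pos ⟨h0, hx⟩, if_pos ⟨h0, by linarith⟩, max_eq_right (by linarith)]
    · rw [if_neg fun h => hx h.2]
      by_cases hxD : x ≤ D
      · rw [if_pos ⟨by linarith, hxD⟩, if_pos ⟨h0, hxD⟩, max_eq_left (by linarith)]
      · rw [if_neg fun h => hxD h.2, if_neg fun h => hxD h.2]
  · have h1 : ¬D / 2 ≤ x := by linarith
    rw [if_neg fun h => h0 h.1, if_neg fun h => h1 h.1, if_neg fun h => h0 h.1]

lemma mul_indicator_Icc_eq (F w : ℝ → ℝ) (D : ℝ) :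
    (fun x => F x * (Set.Icc 0 D).indicator w x) =
      (Set.Icc 0 D).indicator fun x => F x * w x := by
  funext x
  by_cases hx : x ∈ Set.Icc 0 D <;> simp [hx]

lemma setIntegral_univ_mul_indicator_Icc {D : ℝ} (hD : 0 ≤ D) (F w : ℝ → ℝ) :
    ∫ x in Set.univ, F x * (Set.Icc 0 D).indicator w x = ∫ x in 0..D, F x * w x := by
  rw [mul_indicator_Icc_eq, Measure.restrict_univ, integral_indicator measurableSet_Icc,
    integral_Icc_eq_integral_Ioc, intervalIntegral.integral_of_le hD]

section Symmetric

variable {w : ℝ → ℝ} {D : ℝ}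

lemma integral_zero_half_eq_of_symm (hsymm : ∀ x, w (D - x) = w x) :
    ∫ x in 0..D / 2, w x = ∫ x in D / 2..D, w x := by
  have h := intervalIntegral.integral_comp_sub_left (a := 0) (b := D / 2) w D
  simp only [hsymm] at h
  rw [h]
  congr 1 <;> ring

lemma integral_sub_half_mul_eq_zero (hsymm : ∀ x, w (D - x) = w x) :
    ∫ x in 0..D, (x - D / 2) * w x = 0 := by
  have h := intervalIntegral.integral_comp_sub_left (a := 0) (b := D)
    (fun x => (x - D / 2) * w x) D
  have h2 : ∀ x, (D - x - D / 2) * w (D - x) = -((x - D / 2) * w x) := fun x => by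
    rw [hsymm]; ring
  simp only [h2, sub_self, sub_zero, intervalIntegral.integral_neg] at h
  linarith

end Symmetric

/-- The weighted Poincaré inequality for the model weight, with the explicit constant. -/
lemma modelWeight_poincare {a n D : ℝ} (ha : 0 < a) (hn : 0 < n) (hD : 0 < D) {f : ℝ → ℝ}
    {C : NNReal} (hf : LipschitzOnWith C f (Set.Icc 0 D))
    (hmean : ∫ x in 0..D, f x * modelWeight a n D x = 0) :
    (1 / 4) * max ((n * a) ^ 2) ((n + 1) ^ 2 / D ^ 2) *
        (Real.sinh (a * (D / 2)) / Real.sinh (a * D)) ^ n *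
        (∫ x in 0..D, f x ^ 2 * modelWeight a n D x) ≤
      ∫ x in 0..D, deriv f x ^ 2 * modelWeight a n D x := by
  set w := modelWeight a n D with hw_def
  have hw : Continuous w := continuous_modelWeight ha hD
  have hw0 : ∀ x, 0 < w x := modelWeight_pos ha hD
  have hsymm : ∀ x, w (D - x) = w x := modelWeight_sub_left a n D
  have hhalf : D / 2 ≤ D := by linarith
  have hW : ∫ t in D / 2..D, w t = ∫ t in D / 2..D, (Real.sinh (a * t) / a) ^ n :=
    intervalIntegral.integral_congr fun t ht => by
      rw [Set.uIcc_of_le hhalf] at ht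
      exact modelWeight_of_half_le ht.1
  have hV : ∫ t in D / 2..D, (w t)⁻¹ = ∫ t in D / 2..D, (Real.sinh (a * t) / a) ^ (-n) :=
    intervalIntegral.integral_congr fun t ht => by
      rw [Set.uIcc_of_le hhalf] at ht
      have h0 : 0 < t := lt_of_lt_of_le (by linarith) ht.1
      have h1 : 0 ≤ Real.sinh (a * t) / a :=
        div_nonneg (Real.sinh_nonneg_iff.2 (mul_pos ha h0).le) ha.le
      simp only [Real.rpow_neg h1, hw_def, modelWeight_of_half_le ht.1]
  have hbound := max_mul_integral_mul_integral_le ha hn hD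
  rw [← hW, ← hV] at hbound
  have hV0 : 0 < ∫ t in D / 2..D, (w t)⁻¹ :=
    intervalIntegral.intervalIntegral_pos_of_pos
      ((hw.inv₀ fun x => (hw0 x).ne').intervalIntegrable _ _) (fun x => inv_pos.2 (hw0 x))
      (by linarith)
  have hH : ∫ x in 0..D, w x = 2 * ∫ t in D / 2..D, w t := by
    rw [← intervalIntegral.integral_add_adjacent_intervals (hw.intervalIntegrable 0 (D / 2))
      (hw.intervalIntegrable (D / 2) D), integral_zero_half_eq_of_symm hsymm, two_mul]
  have hP := integral_sq_mul_le_of_integral_inv_le hw hw0 hf (by linarith) hhalf hV0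
    (integral_zero_half_eq_of_symm (w := fun x => (w x)⁻¹) fun x => by rw [hsymm]).le le_rfl hmean
  rw [hH] at hP
  set M := max ((n * a) ^ 2) ((n + 1) ^ 2 / D ^ 2)
  set ρ := (Real.sinh (a * (D / 2)) / Real.sinh (a * D)) ^ n
  set V := ∫ t in D / 2..D, (w t)⁻¹
  set W := ∫ t in D / 2..D, w t
  have hM : 0 ≤ M := le_max_of_le_left (sq_nonneg _)
  have hρ : 0 ≤ ρ := Real.rpow_nonneg (div_nonneg
    (Real.sinh_nonneg_iff.2 (by positivity)) (Real.sinh_nonneg_iff.2 (by positivity))) _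
  have hE : 0 ≤ ∫ x in 0..D, deriv f x ^ 2 * w x :=
    intervalIntegral.integral_nonneg hD.le fun x _ => mul_nonneg (sq_nonneg _) (hw0 x).le
  set E := ∫ x in 0..D, deriv f x ^ 2 * w x
  calc 1 / 4 * M * ρ * (∫ x in 0..D, f x ^ 2 * w x)
      ≤ 1 / 4 * M * ρ * (V * (2 * W) * E) := by gcongr
    _ = 1 / 2 * (M * ρ * (V * W)) * E := by ring
    _ ≤ 1 / 2 * 2 * E := by gcongr
    _ = E := by ring

lemma integral_slopeOn_sq_mul_eq {f : ℝ → ℝ} {D : ℝ} {C : NNReal} (hD : 0 ≤ D)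
    (hf : LipschitzOnWith C f (Set.Icc 0 D)) (w : ℝ → ℝ) :
    ∫ x in 0..D, slopeOn f Set.univ x ^ 2 * w x = ∫ x in 0..D, deriv f x ^ 2 * w x := by
  rw [← Set.uIcc_of_le hD] at hf
  refine intervalIntegral.integral_congr_ae ?_
  filter_upwards [hf.absolutelyContinuousOnInterval.ae_differentiableAt] with x hx hx'
  rw [slopeOn_univ_of_differentiableAt (hx (Set.uIoc_subset_uIcc hx')), sq_abs]

/-- Lower bound for `λ[h_{K,N,D}]` when `K < 0` (Lemma 5.3). -/
theorem stmt_13 (K N D : ℝ) (hK : K < 0) (hN : 1 < N) (hD : 0 < D) :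
    (1 / 4) * max (|K| * (N - 1)) (N ^ 2 / D ^ 2) *
        (Real.sinh (Real.sqrt (-K / (N - 1)) * (D / 2)) /
          Real.sinh (Real.sqrt (-K / (N - 1)) * D)) ^ (N - 1)
      ≤ poincareConst (modelDensity K N D) Set.univ := by
  have hn : 0 < N - 1 := by linarith
  have hq : 0 < -K / (N - 1) := div_pos (by linarith) hn
  have ha : 0 < Real.sqrt (-K / (N - 1)) := Real.sqrt_pos.2 hq
  have hM : |K| * (N - 1) = ((N - 1) * Real.sqrt (-K / (N - 1))) ^ 2 := by
    rw [mul_pow, Real.sq_sqrt hq.le, abs_of_neg hK]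
    field_simp
  have hN' : N ^ 2 / D ^ 2 = (N - 1 + 1) ^ 2 / D ^ 2 := by rw [sub_add_cancel]
  rw [poincareConst, modelDensity_eq_indicator hK hN hD, hM, hN']
  simp only [setIntegral_univ_mul_indicator_Icc hD.le]
  set a := Real.sqrt (-K / (N - 1))
  have hw : Continuous (modelWeight a (N - 1) D) := continuous_modelWeight ha hD
  refine le_csInf ⟨_, fun x => x - D / 2, ?_,
    integral_sub_half_mul_eq_zero (modelWeight_sub_left a (N - 1) D), ?_, ?_, rfl⟩ ?_
  · exact fun x _ => ⟨1, one_pos, 1, (LipschitzWith.of_dist_le_mul fun y z => by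
      simp [Real.dist_eq]).lipschitzOnWith⟩
  · refine intervalIntegral.integral_pos hD (by fun_prop) (fun x _ =>
      mul_nonneg (sq_nonneg _) (modelWeight_pos ha hD x).le) ⟨D, ⟨hD.le, le_rfl⟩, ?_⟩
    exact mul_pos (pow_pos (by simp [hD]) 2) (modelWeight_pos ha hD D)
  · rw [mul_indicator_Icc_eq, integrableOn_univ, integrable_indicator_iff measurableSet_Icc]
    exact Continuous.integrableOn_Icc (by fun_prop)
  · rintro r ⟨f, hf, hmean, hpos, -, rfl⟩
    obtain ⟨C, hC⟩ := hf.exists_lipschitzOnWith_Icc 0 D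
    rw [le_div_iff₀ hpos, integral_slopeOn_sq_mul_eq hD.le hC]
    exact modelWeight_poincare ha hn hD hC hmean
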